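/- arXiv:2407.17995 — 3 statements merged into one kernel-verified Lean document; each statement's English description precedes it below -/
import Mathlib

section
/- (Statement 1) Let P be a polynomial with real coefficients of degree at most 2n, and suppose that for some real number λ the identity P(x) = P(λ − x) holds for all real x. Then there exists a polynomial Q with real coefficients of degree at most n such that P(x) = Q((x − λ/2)²) for all real x. -/
/-!
Recentred at its axis of symmetry `c = λ / 2`, `P` becomes the even polynomial `P(X + c)`. Its odd
coefficients equal their own negatives, hence vanish, so it is a polynomial in `X²` of half the
degree.
-/

open Polynomial
open scoped nonZeroDivisors

theorem expand_contract_of_coeff_eq_zero {R : Type*} [CommSemiring R] {p : ℕ} (hp : p ≠ 0)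
    {f : R[X]} (hf : ∀ k, ¬p ∣ k → f.coeff k = 0) : expand R p (contract p f) = f := by
  ext k
  rw [coeff_expand hp.pos]
  split_ifs with hk
  · rw [coeff_contract hp, Nat.div_mul_cancel hk]
  · exact (hf k hk).symm

section Ring

variable {R : Type*} [Ring R]

theorem coeff_comp_neg_X (f : R[X]) (k : ℕ) : (f.comp (-X)).coeff k = f.coeff k * (-1) ^ k := by
  have neg_X_eq : (-X : R[X]) = C (-1) * X := by simp
  rw [neg_X_eq, comp_C_mul_X_coeff]

theorem coeff_eq_zero_of_comp_neg_X_eq_self (h2 : (2 : R) ∈ R⁰) {f : R[X]}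
    (hf : f.comp (-X) = f) {k : ℕ} (hk : Odd k) : f.coeff k = 0 := by
  have neg_coeff : -f.coeff k = f.coeff k := by
    simpa [hk.neg_one_pow, hf] using (coeff_comp_neg_X f k).symm
  have two_mul_coeff : 2 * f.coeff k = 0 := by
    rw [two_mul, add_eq_zero_iff_neg_eq, neg_coeff]
  exact h2.1 _ two_mul_coeff

end Ring

section CommRing

variable {R : Type*} [CommRing R]

theorem expand_contract_two_of_comp_neg_X_eq_self (h2 : (2 : R) ∈ R⁰) {f : R[X]}
    (hf : f.comp (-X) = f) : expand R 2 (contract 2 f) = f :=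
  expand_contract_of_coeff_eq_zero two_ne_zero fun _ hk =>
    coeff_eq_zero_of_comp_neg_X_eq_self h2 hf (by rwa [← Nat.not_even_iff_odd, even_iff_two_dvd])

theorem taylor_comp_neg_X (c : R) (f : R[X]) :
    (taylor c f).comp (-X) = taylor c (f.comp (C (2 * c) - X)) := by
  have neg_X_add_C : -X + C c = C (2 * c) - (X + C c) := by
    rw [two_mul, C_add]; ring
  simp only [taylor_apply, comp_assoc, add_comp, sub_comp, X_comp, C_comp, neg_X_add_C]

theorem taylor_comp_X_sub_C (c : R) (f : R[X]) : (taylor c f).comp (X - C c) = f := by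
  simp [taylor_apply, comp_assoc]

theorem symmetric_poly_reduction_general (h2 : (2 : R) ∈ R⁰) (n : ℕ) (c : R) (P : R[X])
    (hdeg : P.natDegree ≤ 2 * n) (hsym : P.comp (C (2 * c) - X) = P) :
    ∃ Q : R[X], Q.natDegree ≤ n ∧ P = Q.comp ((X - C c) ^ 2) := by
  have even_taylor : (taylor c P).comp (-X) = taylor c P := by rw [taylor_comp_neg_X, hsym]
  obtain ⟨Q, expand_Q⟩ : ∃ Q, expand R 2 Q = taylor c P :=
    ⟨_, expand_contract_two_of_comp_neg_X_eq_self h2 even_taylor⟩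
  refine ⟨Q, ?_, ?_⟩
  · have natDegree_Q : Q.natDegree * 2 = P.natDegree := by
      rw [← natDegree_expand, expand_Q, natDegree_taylor]
    lia
  · calc
      P = (taylor c P).comp (X - C c) := (taylor_comp_X_sub_C c P).symm
      _ = (Q.comp (X ^ 2)).comp (X - C c) := by rw [← expand_Q, expand_eq_comp_X_pow]
      _ = Q.comp ((X - C c) ^ 2) := by rw [comp_assoc, X_pow_comp]

end CommRing

theorem symmetric_poly_reduction (n : ℕ) (lam : ℝ) (P : Polynomial ℝ)
    (hdeg : P.natDegree ≤ 2 * n)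
    (hsym : ∀ x : ℝ, P.eval x = P.eval (lam - x)) :
    ∃ Q : Polynomial ℝ, Q.natDegree ≤ n ∧
      ∀ x : ℝ, P.eval x = Q.eval ((x - lam / 2) ^ 2) := by
  obtain ⟨Q, hQ, rfl⟩ := symmetric_poly_reduction_general (by simp) n (lam / 2) P hdeg
    (Polynomial.funext fun x => by simp [hsym x, mul_div_cancel₀])
  exact ⟨Q, hQ, fun x => by simp⟩
end

section
/- (Example 3, first equation) For any real numbers a, b, c, d and any natural number n ≥ 1, the polynomial P(x) = (x + a)^{2n} + (x + b)^{2n} + c(x + a)(x + b) − d satisfies P(x) = P(−a − b − x) for all real x, and there exists a polynomial Q with real coefficients of degree at most n such that P(x) = Q((x + (a + b)/2)²) for all real x. -/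
/-!
Put `y = x + m` with `2 * m = a + b`, and `h = a - m`, so that `x + a = y + h` and
`x + b = y - h`. The reflection `x ↦ -a - b - x` becomes `y ↦ -y`, which swaps `x + a` with
`-(x + b)`. Moreover `(y + h) ^ (2 * n) + (y - h) ^ (2 * n)` is `f y + f (-y)` for
`f = (X + h) ^ (2 * n)`, and symmetrizing any polynomial `f` in this way cancels its odd
coefficients and doubles its even ones, leaving a polynomial in `y ^ 2` of at most half the degree.
The remaining product `(x + a) * (x + b)` is `y ^ 2 - h ^ 2`.
-/

open Polynomial

lemma natDegree_contract_le {R : Type*} [CommSemiring R] {p : ℕ} (hp : p ≠ 0) (f : R[X]) :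
    (contract p f).natDegree ≤ f.natDegree / p := by
  refine natDegree_le_iff_coeff_eq_zero.2 fun k hk => ?_
  rw [coeff_contract hp]
  exact coeff_eq_zero_of_natDegree_lt ((Nat.div_lt_iff_lt_mul (Nat.pos_of_ne_zero hp)).1 hk)

section CommRing

variable {R : Type*} [CommRing R]

lemma add_comp_neg_X_eq_expand (f : R[X]) :
    f + f.comp (-X) = expand R 2 (C 2 * contract 2 f) := by
  ext k
  have neg_X_eq : (-X : R[X]) = C (-1) * X := by simp
  rw [coeff_add, neg_X_eq, comp_C_mul_X_coeff, coeff_expand two_pos, coeff_C_mul,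
    coeff_contract two_ne_zero]
  split_ifs with hk
  · rw [Nat.div_mul_cancel hk, (even_iff_two_dvd.2 hk).neg_one_pow]
    ring
  · rw [(Nat.not_even_iff_odd.1 (even_iff_two_dvd.not.2 hk)).neg_one_pow]
    ring

lemma eval_add_eval_neg (f : R[X]) (y : R) :
    f.eval y + f.eval (-y) = (C 2 * contract 2 f).eval (y ^ 2) := by
  rw [← expand_eval, ← add_comp_neg_X_eq_expand, eval_add, eval_comp, eval_neg, eval_X]

lemma exists_eval_sq_eq_eval_add_eval_neg {f : R[X]} {n : ℕ} (hf : f.natDegree ≤ 2 * n) :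
    ∃ Q : R[X], Q.natDegree ≤ n ∧ ∀ y : R, f.eval y + f.eval (-y) = Q.eval (y ^ 2) := by
  refine ⟨C 2 * contract 2 f, ?_, eval_add_eval_neg f⟩
  calc (C 2 * contract 2 f).natDegree
      ≤ (contract 2 f).natDegree := natDegree_C_mul_le _ _
    _ ≤ f.natDegree / 2 := natDegree_contract_le two_ne_zero f
    _ ≤ n := Nat.div_le_of_le_mul hf

lemma exists_eval_sq_eq_add_pow_add_sub_pow (h : R) (n : ℕ) :
    ∃ Q : R[X], Q.natDegree ≤ n ∧
      ∀ y : R, (y + h) ^ (2 * n) + (y - h) ^ (2 * n) = Q.eval (y ^ 2) := by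
  have natDegree_X_add_C_le : (X + C h).natDegree ≤ 1 := by compute_degree
  have natDegree_le : ((X + C h) ^ (2 * n)).natDegree ≤ 2 * n :=
    (natDegree_pow_le_of_le (2 * n) natDegree_X_add_C_le).trans_eq (mul_one _)
  obtain ⟨Q, hQ_deg, hQ⟩ := exists_eval_sq_eq_eval_add_eval_neg natDegree_le
  refine ⟨Q, hQ_deg, fun y => ?_⟩
  have reflect : (y - h) ^ (2 * n) = (-y + h) ^ (2 * n) := by
    rw [← (even_two_mul n).neg_pow, neg_sub, neg_add_eq_sub]
  rw [reflect, ← hQ]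
  simp only [eval_pow, eval_add, eval_X, eval_C]

theorem example3_first_general (a b c d m : R) (hm : 2 * m = a + b) (n : ℕ) (hn : 1 ≤ n)
    (P : R → R)
    (hP : ∀ x : R, P x =
      (x + a) ^ (2 * n) + (x + b) ^ (2 * n) + c * (x + a) * (x + b) - d) :
    (∀ x : R, P x = P (-a - b - x)) ∧
    ∃ Q : R[X], Q.natDegree ≤ n ∧ ∀ x : R, P x = Q.eval ((x + m) ^ 2) := by
  constructor
  · intro x
    have ha : -a - b - x + a = -(x + b) := by ring
    have hb : -a - b - x + b = -(x + a) := by ring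
    rw [hP, hP, ha, hb, (even_two_mul n).neg_pow, (even_two_mul n).neg_pow]
    ring
  · obtain ⟨Q, hQ_deg, hQ⟩ := exists_eval_sq_eq_add_pow_add_sub_pow (a - m) n
    refine ⟨Q + (C c * (X - C ((a - m) ^ 2)) - C d), ?_, fun x => ?_⟩
    · refine natDegree_add_le_of_degree_le hQ_deg (le_trans ?_ hn)
      compute_degree
    · have ha : x + a = x + m + (a - m) := by ring
      have hb : x + b = x + m - (a - m) := by linear_combination -hm
      simp only [hP, ha, hb, eval_add, eval_sub, eval_mul, eval_C, eval_X, ← hQ]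
      ring

end CommRing

theorem example3_first (a b c d : ℝ) (n : ℕ) (hn : 1 ≤ n)
    (P : ℝ → ℝ)
    (hP : ∀ x : ℝ, P x =
      (x + a) ^ (2 * n) + (x + b) ^ (2 * n) + c * (x + a) * (x + b) - d) :
    (∀ x : ℝ, P x = P (-a - b - x)) ∧
    ∃ Q : Polynomial ℝ, Q.natDegree ≤ n ∧
      ∀ x : ℝ, P x = Q.eval ((x + (a + b) / 2) ^ 2) :=
  example3_first_general a b c d ((a + b) / 2) (by ring) n hn P hP
end

section
/- (Example 4) For any real numbers a, b, c and any natural number n, the polynomial P(x) = (x + a)^{2n+1} + (x + b)^{2n+1} + c(2x + a + b) satisfies P(−a − b − x) = −P(x) for all real x; consequently x = −(a + b)/2 is a root of P, and there exists a polynomial Q with real coefficients of degree at most 2n such that P(x) = (x + (a + b)/2)·Q(x) for all real x and Q(x) = Q(−a − b − x) for all real x. -/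
/-!
The reflection `x ↦ -a - b - x` sends `(x + a, x + b)` to `(-(x + b), -(x + a))`, so `P` is odd
under it because `2 * n + 1` is odd. A polynomial that is odd under the reflection about `m`
vanishes at the fixed point `m`; the factor `X - m` is itself odd, so cancelling it leaves an even
quotient.
-/

open Polynomial

section Reflection

variable {R : Type*} [CommRing R] {p : R[X]} {m : R}

theorem isRoot_of_comp_reflection_eq_neg [NoZeroDivisors R] [NeZero (2 : R)]
    (hp : p.comp (C (2 * m) - X) = -p) : p.IsRoot m := by
  have eval_eq_neg : p.eval m = -p.eval m :=
    calc p.eval m = (p.comp (C (2 * m) - X)).eval m := by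
          simp only [eval_comp, eval_sub, eval_C, eval_X, two_mul, add_sub_cancel_right]
      _ = -p.eval m := by rw [hp, eval_neg]
  have two_mul_eval : 2 * p.eval m = 0 := by linear_combination eval_eq_neg
  exact (mul_eq_zero.mp two_mul_eval).resolve_left two_ne_zero

theorem divByMonic_X_sub_C_comp_reflection (hp : p.comp (C (2 * m) - X) = -p)
    (hm : p.IsRoot m) :
    (p /ₘ (X - C m)).comp (C (2 * m) - X) = p /ₘ (X - C m) := by
  set q := p /ₘ (X - C m)
  have factor : (X - C m) * q = p := mul_divByMonic_eq_iff_isRoot.mpr hm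
  have factor_odd : (X - C m).comp (C (2 * m) - X) = -(X - C m) := by
    simp only [sub_comp, X_comp, C_comp, C_mul, C_ofNat]
    ring
  refine (monic_X_sub_C m).isRegular.left ?_
  calc (X - C m) * q.comp (C (2 * m) - X)
      = -((X - C m) * q).comp (C (2 * m) - X) := by rw [mul_comp, factor_odd, neg_mul, neg_neg]
    _ = (X - C m) * q := by rw [factor, hp, neg_neg]

end Reflection

section ShiftedPowSum

variable {R : Type*} [CommRing R]

/-- The polynomial `(x + a) ^ k + (x + b) ^ k + c (2x + a + b)`, for an arbitrary exponent `k`;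
the paper's `P` is the case `k = 2n + 1`. -/
noncomputable def shiftedPowSum (a b c : R) (k : ℕ) : R[X] :=
  (X + C a) ^ k + (X + C b) ^ k + C c * (2 * X + C a + C b)

theorem eval_shiftedPowSum (a b c : R) (k : ℕ) (x : R) :
    (shiftedPowSum a b c k).eval x = (x + a) ^ k + (x + b) ^ k + c * (2 * x + a + b) := by
  simp [shiftedPowSum]

theorem shiftedPowSum_comp_reflection (a b c : R) {k : ℕ} (hk : Odd k) :
    (shiftedPowSum a b c k).comp (C (-a - b) - X) = -shiftedPowSum a b c k := by
  have swap_left : C (-a - b) - X + C a = -(X + C b) := by simp only [C_sub, C_neg]; ring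
  have swap_right : C (-a - b) - X + C b = -(X + C a) := by simp only [C_sub, C_neg]; ring
  simp only [shiftedPowSum, add_comp, mul_comp, pow_comp, X_comp, C_comp, ofNat_comp,
    swap_left, swap_right, hk.neg_pow]
  simp only [C_sub, C_neg]
  ring

theorem natDegree_shiftedPowSum_le (a b c : R) {k : ℕ} (hk : 1 ≤ k) :
    (shiftedPowSum a b c k).natDegree ≤ k := by
  have pow_le (r : R) : ((X + C r) ^ k).natDegree ≤ k := by compute_degree
  have linear_le : (C c * (2 * X + C a + C b)).natDegree ≤ 1 := by compute_degree
  exact natDegree_add_le_of_degree_le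
    (natDegree_add_le_of_degree_le (pow_le a) (pow_le b)) (linear_le.trans hk)

end ShiftedPowSum

theorem example4_general {K : Type*} [Field K] [NeZero (2 : K)] (a b c : K) (n : ℕ)
    (P : K → K)
    (hP : ∀ x : K, P x =
      (x + a) ^ (2 * n + 1) + (x + b) ^ (2 * n + 1) + c * (2 * x + a + b)) :
    (∀ x : K, P (-a - b - x) = -P x) ∧
    P (-(a + b) / 2) = 0 ∧
    ∃ Q : K[X], Q.natDegree ≤ 2 * n ∧
      (∀ x : K, P x = (x + (a + b) / 2) * Q.eval x) ∧
      (∀ x : K, Q.eval x = Q.eval (-a - b - x)) := by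
  set p := shiftedPowSum a b c (2 * n + 1)
  set m := -(a + b) / 2 with hm
  have P_eq_eval (x : K) : P x = p.eval x := (hP x).trans (eval_shiftedPowSum a b c _ x).symm
  have two_mul_m : 2 * m = -a - b := by rw [hm, mul_div_cancel₀ _ two_ne_zero]; ring
  have p_odd : p.comp (C (-a - b) - X) = -p :=
    shiftedPowSum_comp_reflection a b c (odd_two_mul_add_one n)
  have p_root : p.IsRoot m := isRoot_of_comp_reflection_eq_neg (two_mul_m ▸ p_odd)
  have q_even := divByMonic_X_sub_C_comp_reflection (two_mul_m ▸ p_odd) p_root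
  refine ⟨fun x ↦ ?_, (P_eq_eval m).trans p_root, p /ₘ (X - C m), ?_, fun x ↦ ?_, fun x ↦ ?_⟩
  · simpa [P_eq_eval] using congrArg (eval x) p_odd
  · rw [natDegree_divByMonic _ (monic_X_sub_C m), natDegree_X_sub_C]
    exact Nat.sub_le_of_le_add (natDegree_shiftedPowSum_le a b c (by lia))
  · have eval_factor : (X - C m).eval x = x + (a + b) / 2 := by
      rw [eval_sub, eval_X, eval_C, hm]; ring
    rw [P_eq_eval, ← eval_factor, ← eval_mul, mul_divByMonic_eq_iff_isRoot.mpr p_root]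
  · simpa [two_mul_m] using (congrArg (eval x) q_even).symm

theorem example4 (a b c : ℝ) (n : ℕ)
    (P : ℝ → ℝ)
    (hP : ∀ x : ℝ, P x =
      (x + a) ^ (2 * n + 1) + (x + b) ^ (2 * n + 1) + c * (2 * x + a + b)) :
    (∀ x : ℝ, P (-a - b - x) = -P x) ∧
    P (-(a + b) / 2) = 0 ∧
    ∃ Q : Polynomial ℝ, Q.natDegree ≤ 2 * n ∧
      (∀ x : ℝ, P x = (x + (a + b) / 2) * Q.eval x) ∧
      (∀ x : ℝ, Q.eval x = Q.eval (-a - b - x)) :=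
  example4_general a b c n P hP
end
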